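/- Assume (A1'), (A2) and (A3). Let λ₀ ∈ D be a point at which Λ is differentiable and set x₀ = ∇Λ(λ₀). If liminf_{n→∞} (log k(n))/n > Λ*(x₀), then there exists r > 0 such that the closed ball B(λ₀,r) is contained in D and, with probability 1, Λ_n^ω converges uniformly to Λ on B(λ₀,r). (Theorem 5(1).) -/

import Mathlib

open MeasureTheory ProbabilityTheory Filter Set Real
open scoped ENNReal NNReal Classical Topology RealInnerProductSpace

section ConvexConvergence

variable {V : Type*} [NormedAddCommGroup V] [NormedSpace ℝ V]

/-- A convex function that is bounded above on a set whose convex hull contains a ball, and bounded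
below at the centre of this ball, is Lipschitz on a smaller ball, with an explicit constant. -/
lemma ConvexOn.lipschitzOnWith_of_le_of_ball_subset_convexHull {x₀ : V} {s r M : ℝ} {F : Set V}
    (hr : 0 < r) (hF : F ⊆ Metric.ball x₀ s) (hball : Metric.ball x₀ (2 * r) ⊆ convexHull ℝ F)
    {f : V → ℝ} (hf : ConvexOn ℝ (Metric.ball x₀ s) f) (hM : ∀ q ∈ F, f q ≤ M)
    (hM₀ : -M ≤ f x₀) :
    LipschitzOnWith (2 * (3 * M) / (r / 2)).toNNReal f (Metric.ball x₀ (2 * r - r / 2)) := by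
  have hhull : convexHull ℝ F ⊆ Metric.ball x₀ s := convexHull_min hF (convex_ball _ _)
  have hup : ∀ a ∈ Metric.ball x₀ (2 * r), f a ≤ M := by
    intro a ha
    obtain ⟨y, hy, hay⟩ := hf.exists_ge_of_mem_convexHull hF (hball ha)
    exact hay.trans (hM y hy)
  refine (hf.subset (hball.trans hhull) (convex_ball _ _)).lipschitzOnWith_of_abs_le
    (by positivity) ?_
  intro a ha
  have ha' : a ∈ Metric.ball x₀ (2 * r) := ha
  have h1 := hup a ha'
  have hb : (2 : ℝ) • x₀ - a ∈ Metric.ball x₀ (2 * r) := by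
    rw [Metric.mem_ball, dist_eq_norm] at ha' ⊢
    rw [show (2 : ℝ) • x₀ - a - x₀ = -(a - x₀) by rw [two_smul]; abel, norm_neg]
    exact ha'
  have h2 := hup _ hb
  have h3 := hf.2 (hhull (hball ha')) (hhull (hball hb)) (show (0 : ℝ) ≤ 1 / 2 by norm_num)
    (show (0 : ℝ) ≤ 1 / 2 by norm_num) (by norm_num)
  rw [show (1 / 2 : ℝ) • a + (1 / 2 : ℝ) • ((2 : ℝ) • x₀ - a) = x₀ by
    rw [← smul_add, add_sub_cancel, smul_smul]; norm_num] at h3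
  simp only [smul_eq_mul] at h3
  rw [abs_le]
  constructor <;> linarith

/-- Convex functions on a ball of a finite-dimensional space which converge pointwise on a suitable
countable set converge uniformly on a smaller ball. -/
lemma exists_countable_tendstoUniformlyOn_of_convexOn [FiniteDimensional ℝ V] (x₀ : V) {s : ℝ}
    (hs : 0 < s) :
    ∃ Q : Set V, Q.Countable ∧ Q ⊆ Metric.ball x₀ s ∧ ∃ r > 0, r < s ∧
      ∀ (f : ℕ → V → ℝ) (g : V → ℝ), (∀ n, ConvexOn ℝ (Metric.ball x₀ s) (f n)) →
        ConvexOn ℝ (Metric.ball x₀ s) g → (∀ q ∈ Q, Tendsto (fun n => f n q) atTop (𝓝 (g q))) →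
        TendstoUniformlyOn f g atTop (Metric.closedBall x₀ r) := by
  obtain ⟨b, hx₀b, hbC⟩ := exists_mem_interior_convexHull_affineBasis
    (Metric.ball_mem_nhds x₀ hs)
  have hF : range b ⊆ Metric.ball x₀ s := (subset_convexHull ℝ _).trans hbC
  obtain ⟨ρ, hρ, hρsub⟩ := Metric.mem_nhds_iff.1 (mem_interior_iff_mem_nhds.1 hx₀b)
  set r := min (ρ / 2) (s / 2) with hr_def
  have hr : 0 < r := by positivity
  have hrρ : 2 * r ≤ ρ := by have := min_le_left (ρ / 2) (s / 2); linarith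
  have hrs : 2 * r ≤ s := by have := min_le_right (ρ / 2) (s / 2); linarith
  have hball : Metric.ball x₀ (2 * r) ⊆ convexHull ℝ (range b) :=
    (Metric.ball_subset_ball hrρ).trans hρsub
  have hfin : (range b).Finite := finite_range b
  have : ProperSpace V := FiniteDimensional.proper_real V
  obtain ⟨Q₀, hQc, hQd⟩ := TopologicalSpace.exists_countable_dense V
  refine ⟨range b ∪ {x₀} ∪ (Q₀ ∩ Metric.ball x₀ s), ?_, ?_, r, hr, by linarith, ?_⟩
  · exact (hfin.countable.union (countable_singleton _)).union (hQc.mono inter_subset_left)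
  · refine union_subset (union_subset hF ?_) inter_subset_right
    simpa using hs
  intro f g hf hg hlim
  obtain ⟨M, hM⟩ : ∃ M : ℝ, (∀ q ∈ range b, g q < M) ∧ -M < g x₀ := by
    obtain ⟨M₁, hM₁⟩ := (hfin.image g).bddAbove
    refine ⟨max (M₁ + 1) (-g x₀ + 1), fun q hq => ?_, ?_⟩
    · have := hM₁ (mem_image_of_mem g hq)
      exact lt_of_lt_of_le (by linarith) (le_max_left _ _)
    · have := le_max_right (M₁ + 1) (-g x₀ + 1)
      linarith
  set K : ℝ≥0 := (2 * (3 * M) / (r / 2)).toNNReal with hK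
  have hgL : LipschitzOnWith K g (Metric.ball x₀ (2 * r - r / 2)) :=
    hg.lipschitzOnWith_of_le_of_ball_subset_convexHull hr hF hball (fun q hq => (hM.1 q hq).le)
      hM.2.le
  have hfL : ∀ᶠ n in atTop, LipschitzOnWith K (f n) (Metric.ball x₀ (2 * r - r / 2)) := by
    have h1 : ∀ᶠ n in atTop, ∀ q ∈ range b, f n q < M := by
      rw [eventually_all_finite hfin]
      intro q hq
      exact (hlim q (Or.inl (Or.inl hq))).eventually_lt_const (hM.1 q hq)
    have h2 : ∀ᶠ n in atTop, -M < f n x₀ :=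
      (hlim x₀ (Or.inl (Or.inr rfl))).eventually_const_lt hM.2
    filter_upwards [h1, h2] with n hn1 hn2
    exact (hf n).lipschitzOnWith_of_le_of_ball_subset_convexHull hr hF hball
      (fun q hq => (hn1 q hq).le) hn2.le
  rw [← tendstoLocallyUniformlyOn_iff_tendstoUniformlyOn_of_compact (isCompact_closedBall x₀ r),
    Metric.tendstoLocallyUniformlyOn_iff]
  intro ε hε x hx
  have hKpos : (0 : ℝ) < K + 1 := by positivity
  set η := min (ε / (8 * (K + 1))) (r / 2) with hη
  have hηpos : 0 < η := by positivity
  have hηε : (K + 1) * η ≤ ε / 8 := by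
    have : η ≤ ε / (8 * (K + 1)) := min_le_left _ _
    calc (K + 1) * η ≤ (K + 1) * (ε / (8 * (K + 1))) := by gcongr
      _ = ε / 8 := by field_simp
  obtain ⟨q, hqQ, hq⟩ := hQd.exists_dist_lt x hηpos
  have hηr : η ≤ r / 2 := min_le_right _ _
  have hqball : q ∈ Metric.ball x₀ (2 * r - r / 2) := by
    have h1 := dist_triangle q x x₀
    rw [dist_comm q x] at h1
    have := Metric.mem_closedBall.1 hx
    rw [Metric.mem_ball]; linarith
  have hqs : q ∈ Metric.ball x₀ s := Metric.ball_subset_ball (by linarith) hqball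
  refine ⟨Metric.ball x η ∩ Metric.closedBall x₀ r,
    inter_mem (mem_nhdsWithin_of_mem_nhds (Metric.ball_mem_nhds x hηpos)) self_mem_nhdsWithin, ?_⟩
  have hq' : ∀ᶠ n in atTop, dist (f n q) (g q) < ε / 4 :=
    Metric.tendsto_nhds.1 (hlim q (Or.inr ⟨hqQ, hqs⟩)) _ (by positivity)
  filter_upwards [hfL, hq'] with n hn hnq y hy
  have hyball : y ∈ Metric.ball x₀ (2 * r - r / 2) := by
    have := Metric.mem_closedBall.1 hy.2
    rw [Metric.mem_ball]; linarith
  have hyq : dist y q ≤ 2 * η := by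
    have := dist_triangle y x q
    have := Metric.mem_ball.1 hy.1
    linarith
  have h1 := hgL.dist_le_mul y hyball q hqball
  have h2 := hn.dist_le_mul q hqball y hyball
  rw [dist_comm q y] at h2
  have h3 := dist_triangle4 (g y) (g q) (f n q) (f n y)
  rw [dist_comm (g q)] at h3
  have h4 : (K : ℝ) * dist y q ≤ (K + 1) * (2 * η) := by gcongr; linarith
  linarith

end ConvexConvergence

/-- The logarithm of a sum of exponentials of linear forms is convex. -/
lemma convexOn_log_mul_sum_exp_inner {H ι : Type*} [NormedAddCommGroup H] [InnerProductSpace ℝ H]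
    (s : Finset ι) (hs : s.Nonempty) (v : ι → H) {c : ℝ} (hc : 0 < c) :
    ConvexOn ℝ univ (fun x : H => Real.log (c * ∑ i ∈ s, Real.exp ⟪x, v i⟫)) := by
  have hpos : ∀ x : H, 0 < ∑ i ∈ s, Real.exp ⟪x, v i⟫ := fun x =>
    Finset.sum_pos (fun i _ => Real.exp_pos _) hs
  refine ⟨convex_univ, fun x _ y _ a b ha hb hab => ?_⟩
  simp only [smul_eq_mul]
  set A := ∑ i ∈ s, Real.exp ⟪x, v i⟫ with hA
  set B := ∑ i ∈ s, Real.exp ⟪y, v i⟫ with hB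
  have hA0 : 0 < A := hpos x
  have hB0 : 0 < B := hpos y
  have key : ∑ i ∈ s, Real.exp ⟪a • x + b • y, v i⟫ ≤
      Real.exp (a * Real.log A + b * Real.log B) := by
    have h1 : ∀ i ∈ s, Real.exp ⟪a • x + b • y, v i⟫ ≤
        Real.exp (a * Real.log A + b * Real.log B) *
          (a * (Real.exp ⟪x, v i⟫ / A) + b * (Real.exp ⟪y, v i⟫ / B)) := by
      intro i _
      have h2 := convexOn_exp.2 (mem_univ (⟪x, v i⟫ - Real.log A))
        (mem_univ (⟪y, v i⟫ - Real.log B)) ha hb hab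
      simp only [smul_eq_mul, Real.exp_sub, Real.exp_log hA0, Real.exp_log hB0] at h2
      calc Real.exp ⟪a • x + b • y, v i⟫
          = Real.exp (a * Real.log A + b * Real.log B) *
            Real.exp (a * (⟪x, v i⟫ - Real.log A) + b * (⟪y, v i⟫ - Real.log B)) := by
            rw [← Real.exp_add, inner_add_left, real_inner_smul_left, real_inner_smul_left]
            congr 1; ring
        _ ≤ _ := by gcongr
    refine (Finset.sum_le_sum h1).trans ?_
    rw [← Finset.mul_sum, Finset.sum_add_distrib, ← Finset.mul_sum, ← Finset.mul_sum,
      ← Finset.sum_div, ← Finset.sum_div, ← hA, ← hB, div_self hA0.ne', div_self hB0.ne',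
      mul_one, mul_one, hab, mul_one]
  rw [Real.log_mul hc.ne' (hpos _).ne', Real.log_mul hc.ne' hA0.ne', Real.log_mul hc.ne' hB0.ne']
  have h3 := Real.log_le_log (hpos _) key
  rw [Real.log_exp] at h3
  have h4 : Real.log c = a * Real.log c + b * Real.log c := by rw [← add_mul, hab, one_mul]
  linarith

/-- A comparison of measures on a sub-σ-algebra, up to an additive error, passes to integrals of
bounded functions. -/
lemma lintegral_ofReal_le_of_forall_measure_le {Ω : Type*} {m mΩ : MeasurableSpace Ω}
    (hm : m ≤ mΩ) {P ν : Measure Ω} {K c : ℝ≥0∞} (h : ∀ A, MeasurableSet[m] A → ν A ≤ K * P A + c)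
    {U : Ω → ℝ} (hU : Measurable[m] U) (hU0 : ∀ ω, 0 ≤ U ω) {M : ℝ} (hUM : ∀ ω, U ω ≤ M) :
    ∫⁻ ω, ENNReal.ofReal (U ω) ∂ν ≤
      K * ∫⁻ ω, ENNReal.ofReal (U ω) ∂P + ENNReal.ofReal M * c := by
  have hU' : Measurable U := hU.mono hm le_rfl
  have hanti : Measurable fun t : ℝ => P {a | t < U a} :=
    Antitone.measurable fun s t hst => measure_mono fun a (ha : t < U a) => lt_of_le_of_lt hst ha
  rw [lintegral_eq_lintegral_meas_lt ν (ae_of_all _ hU0) hU'.aemeasurable,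
    lintegral_eq_lintegral_meas_lt P (ae_of_all _ hU0) hU'.aemeasurable]
  have h1 : ∀ t : ℝ, ν {a | t < U a} ≤ K * P {a | t < U a} + (Iic M).indicator (fun _ => c) t := by
    intro t
    by_cases ht : t ≤ M
    · rw [indicator_of_mem (show t ∈ Iic M from ht)]
      exact h _ (hU measurableSet_Ioi)
    · have : {a | t < U a} = ∅ := by
        ext a
        simp only [mem_ofPred_eq, mem_empty_iff_false, iff_false, not_lt]
        exact (hUM a).trans (not_le.1 ht).le
      simp [this]
  calc ∫⁻ t in Ioi 0, ν {a | t < U a}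
      ≤ ∫⁻ t in Ioi 0, (K * P {a | t < U a} + (Iic M).indicator (fun _ => c) t) :=
        lintegral_mono h1
    _ = K * (∫⁻ t in Ioi 0, P {a | t < U a}) + ENNReal.ofReal M * c := by
        rw [lintegral_add_left (hanti.const_mul K), lintegral_const_mul K hanti,
          lintegral_indicator measurableSet_Iic, lintegral_const,
          Measure.restrict_apply_univ, Measure.restrict_apply measurableSet_Iic,
          inter_comm, Ioi_inter_Iic, Real.volume_Ioc, sub_zero, mul_comm c]

/-- Covariance inequality for bounded functions measurable with respect to two σ-algebras which are
independent up to an additive error `c`. -/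
lemma lintegral_mul_le_of_measure_inter_le {Ω : Type*} {m₁ m₂ mΩ : MeasurableSpace Ω}
    (hm₁ : m₁ ≤ mΩ) (hm₂ : m₂ ≤ mΩ) {P : Measure Ω} {c : ℝ≥0∞}
    (h : ∀ A B, MeasurableSet[m₁] A → MeasurableSet[m₂] B → P (A ∩ B) ≤ P A * P B + c)
    {U W : Ω → ℝ} (hU : Measurable[m₁] U) (hW : Measurable[m₂] W) (hU0 : ∀ ω, 0 ≤ U ω)
    (hW0 : ∀ ω, 0 ≤ W ω) {M : ℝ} (hUM : ∀ ω, U ω ≤ M) (hWM : ∀ ω, W ω ≤ M) :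
    ∫⁻ ω, ENNReal.ofReal (U ω * W ω) ∂P ≤
      (∫⁻ ω, ENNReal.ofReal (U ω) ∂P) * (∫⁻ ω, ENNReal.ofReal (W ω) ∂P) +
        ENNReal.ofReal M * (ENNReal.ofReal M * c) := by
  have hW' : Measurable fun ω => ENNReal.ofReal (W ω) :=
    ENNReal.measurable_ofReal.comp (hW.mono hm₂ le_rfl)
  have hU' : Measurable fun ω => ENNReal.ofReal (U ω) :=
    ENNReal.measurable_ofReal.comp (hU.mono hm₁ le_rfl)
  have step : ∀ A, MeasurableSet[m₁] A →
      P.withDensity (fun ω => ENNReal.ofReal (W ω)) A ≤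
        (∫⁻ ω, ENNReal.ofReal (W ω) ∂P) * P A + ENNReal.ofReal M * c := by
    intro A hA
    rw [withDensity_apply _ (hm₁ _ hA), mul_comm]
    refine lintegral_ofReal_le_of_forall_measure_le hm₂ (fun B hB => ?_) hW hW0 hWM
    rw [Measure.restrict_apply (hm₂ _ hB), inter_comm]
    exact h A B hA hB
  have key := lintegral_ofReal_le_of_forall_measure_le hm₁ step hU hU0 hUM
  rw [lintegral_withDensity_eq_lintegral_mul _ hW' hU'] at key
  rw [mul_comm (∫⁻ ω, ENNReal.ofReal (U ω) ∂P)]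
  refine le_trans (le_of_eq (lintegral_congr fun ω => ?_)) key
  rw [Pi.mul_apply, mul_comm, ENNReal.ofReal_mul (hW0 ω)]

section SecondMoment

variable {Ω : Type*} {mΩ : MeasurableSpace Ω} {P : Measure Ω}

/-- A second moment bound for the lower tail of an average of bounded random variables with common
mean, when variables at distance at least `L` are almost uncorrelated. -/
lemma measure_average_lt_half_mean_le [IsProbabilityMeasure P] {k L : ℕ} (hk : 0 < k)
    {W : ℕ → Ω → ℝ} (hW : ∀ i, Measurable (W i)) (hW0 : ∀ i ω, 0 ≤ W i ω) {M m β : ℝ}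
    (hM : 0 ≤ M) (hm : 0 < m) (hβ : 0 ≤ β) (hWM : ∀ i ω, W i ω ≤ M)
    (hmean : ∀ i, ∫ ω, W i ω ∂P = m)
    (hcov : ∀ i j, i + L ≤ j → ∫ ω, W i ω * W j ω ∂P ≤ m ^ 2 + M ^ 2 * β) :
    P {ω | (k : ℝ)⁻¹ * ∑ i ∈ Finset.range k, W i ω < m / 2} ≤
      ENNReal.ofReal (4 * (2 * L * (M / (k * m)) + (M / m) ^ 2 * β)) := by
  have hk' : (0 : ℝ) < k := by exact_mod_cast hk
  have hinteg : ∀ i, Integrable (W i) P := fun i =>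
    Integrable.of_bound (hW i).aestronglyMeasurable M
      (ae_of_all _ fun ω => by rw [Real.norm_eq_abs, abs_of_nonneg (hW0 i ω)]; exact hWM i ω)
  have hint2 : ∀ i j, Integrable (fun ω => W i ω * W j ω) P := fun i j =>
    Integrable.of_bound ((hW i).mul (hW j)).aestronglyMeasurable (M * M)
      (ae_of_all _ fun ω => by
        rw [Real.norm_eq_abs, abs_of_nonneg (mul_nonneg (hW0 i ω) (hW0 j ω))]
        exact mul_le_mul (hWM i ω) (hWM j ω) (hW0 j ω) hM)
  have hnear : ∀ i j, ∫ ω, W i ω * W j ω ∂P ≤ M * m := by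
    intro i j
    rw [← hmean j, ← integral_const_mul]
    exact integral_mono (hint2 i j) ((hinteg j).const_mul M)
      fun ω => mul_le_mul_of_nonneg_right (hWM i ω) (hW0 j ω)
  have hMm : 0 ≤ M * m := by positivity
  have hpair : ∀ i j, ∫ ω, W i ω * W j ω ∂P ≤
      m ^ 2 + M ^ 2 * β + if j ∈ Finset.Ico (i + 1 - L) (i + L) then M * m else 0 := by
    intro i j
    split_ifs with hij
    · have := hnear i j
      have : 0 ≤ m ^ 2 + M ^ 2 * β := by positivity
      linarith
    · rw [add_zero]
      rw [Finset.mem_Ico, not_and_or, not_le, not_lt] at hij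
      rcases hij with hij | hij
      · rw [show (fun ω => W i ω * W j ω) = fun ω => W j ω * W i ω from
          funext fun ω => mul_comm _ _]
        exact hcov j i (by omega)
      · exact hcov i j hij
  have hrow : ∀ i, ∑ j ∈ Finset.range k, ∫ ω, W i ω * W j ω ∂P ≤
      k * (m ^ 2 + M ^ 2 * β) + 2 * L * (M * m) := by
    intro i
    refine (Finset.sum_le_sum fun j _ => hpair i j).trans ?_
    rw [Finset.sum_add_distrib, Finset.sum_const, Finset.card_range, nsmul_eq_mul,
      ← Finset.sum_filter, Finset.sum_const, nsmul_eq_mul]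
    have hcard : (((Finset.range k).filter
        (fun j => j ∈ Finset.Ico (i + 1 - L) (i + L))).card : ℝ) ≤ 2 * L := by
      have h1 : ((Finset.range k).filter
          (fun j => j ∈ Finset.Ico (i + 1 - L) (i + L))).card ≤ 2 * L := by
        refine (Finset.card_le_card (t := Finset.Ico (i + 1 - L) (i + L)) ?_).trans ?_
        · intro j hj; exact (Finset.mem_filter.1 hj).2
        · rw [Nat.card_Ico]; omega
      exact_mod_cast h1
    gcongr
  set S : Ω → ℝ := fun ω => ∑ i ∈ Finset.range k, W i ω with hS
  have hSint : Integrable S P := integrable_finsetSum _ fun i _ => hinteg i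
  have hSmean : ∫ ω, S ω ∂P = k * m := by
    rw [hS, integral_finsetSum _ fun i _ => hinteg i]
    simp [hmean]
  have hSS : ∀ ω, S ω * S ω = ∑ i ∈ Finset.range k, ∑ j ∈ Finset.range k, W i ω * W j ω :=
    fun ω => Finset.sum_mul_sum _ _ _ _
  have hSSint : Integrable (fun ω => S ω * S ω) P := by
    simp_rw [hSS]
    exact integrable_finsetSum _ fun i _ => integrable_finsetSum _ fun j _ => hint2 i j
  have hSSmean : ∫ ω, S ω * S ω ∂P ≤ k * (k * (m ^ 2 + M ^ 2 * β) + 2 * L * (M * m)) := by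
    simp_rw [hSS]
    rw [integral_finsetSum _ fun i _ => integrable_finsetSum _ fun j _ => hint2 i j]
    refine (Finset.sum_le_sum (g := fun _ => k * (m ^ 2 + M ^ 2 * β) + 2 * L * (M * m))
      fun i _ => ?_).trans (le_of_eq ?_)
    · rw [integral_finsetSum _ fun j _ => hint2 i j]
      exact hrow i
    · rw [Finset.sum_const, Finset.card_range, nsmul_eq_mul]
  have hvareq : ∀ ω, (S ω - k * m) ^ 2 = S ω * S ω - 2 * (k * m) * S ω + (k * m) ^ 2 :=
    fun ω => by ring
  have hvarint : Integrable (fun ω => (S ω - k * m) ^ 2) P := by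
    simp_rw [hvareq]
    exact (hSSint.sub (hSint.const_mul _)).add (integrable_const _)
  have hvar : ∫ ω, (S ω - k * m) ^ 2 ∂P ≤ k ^ 2 * M ^ 2 * β + k * (2 * L) * (M * m) := by
    simp_rw [hvareq]
    have h5 : Integrable (fun ω => S ω * S ω - 2 * (k * m) * S ω) P :=
      hSSint.sub (hSint.const_mul _)
    rw [integral_add h5 (integrable_const _), integral_sub hSSint (hSint.const_mul _),
      integral_const_mul, hSmean, integral_const,
      probReal_univ, one_smul]
    nlinarith
  have hmarkov := mul_meas_ge_le_integral_of_nonneg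
    (ae_of_all P fun ω => sq_nonneg (S ω - k * m)) hvarint ((k * m / 2) ^ 2)
  have hsub : {ω | (k : ℝ)⁻¹ * ∑ i ∈ Finset.range k, W i ω < m / 2} ⊆
      {ω | (k * m / 2) ^ 2 ≤ (S ω - k * m) ^ 2} := by
    intro ω hω
    have h1 : (k : ℝ)⁻¹ * S ω < m / 2 := hω
    rw [inv_mul_lt_iff₀ hk'] at h1
    have h2 : 0 < k * m := by positivity
    show (k * m / 2) ^ 2 ≤ (S ω - k * m) ^ 2
    nlinarith
  refine (measure_mono hsub).trans ?_
  rw [← ofReal_measureReal]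
  refine ENNReal.ofReal_le_ofReal ?_
  have h3 : 0 < (k * m / 2) ^ 2 := by positivity
  have h4 : P.real {ω | (k * m / 2) ^ 2 ≤ (S ω - k * m) ^ 2} ≤
      (k ^ 2 * M ^ 2 * β + k * (2 * L) * (M * m)) / (k * m / 2) ^ 2 := by
    rw [le_div_iff₀ h3, mul_comm]
    exact hmarkov.trans hvar
  refine h4.trans (le_of_eq ?_)
  field_simp
  ring

/-- Borel–Cantelli lemma for events whose probabilities decay exponentially fast. -/
lemma ae_eventually_notMem_of_le_exp {s : ℕ → Set Ω} {C c : ℝ} (hc : 0 < c)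
    (h : ∀ᶠ n : ℕ in atTop, P (s n) ≤ ENNReal.ofReal (C * Real.exp (-(c * n)))) :
    ∀ᵐ ω ∂P, ∀ᶠ n in atTop, ω ∉ s n := by
  obtain ⟨N, hN⟩ := eventually_atTop.1 h
  have hsum : Summable fun n : ℕ => |C| * Real.exp (-(c * n)) := by
    refine Summable.mul_left _ ?_
    have := Real.summable_exp_nat_mul_iff.2 (neg_lt_zero.2 hc)
    refine this.congr fun n => ?_
    congr 1; ring
  have h1 : (∑' n, P (s (n + N))) ≠ ∞ := by
    refine ne_top_of_le_ne_top ?_ (ENNReal.tsum_le_tsum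
      (g := fun n => ENNReal.ofReal (|C| * Real.exp (-(c * ((n + N : ℕ) : ℝ))))) fun n => ?_)
    · exact ((summable_nat_add_iff N).2 hsum).tsum_ofReal_ne_top
    · refine (hN (n + N) (by omega)).trans (ENNReal.ofReal_le_ofReal ?_)
      gcongr
      exact le_abs_self C
  filter_upwards [ae_eventually_notMem h1] with ω hω
  obtain ⟨N', hN'⟩ := eventually_atTop.1 hω
  refine eventually_atTop.2 ⟨N' + N, fun n hn => ?_⟩
  have := hN' (n - N) (by omega)
  rwa [show n - N + N = n by omega] at this

end SecondMoment

/-- Integrability of every power of the generalized inverse of an antitone sequence forces the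
sequence to decay faster than every power. -/
lemma exists_forall_mul_rpow_le_of_lintegral_rpow_lt_top {a : ℕ → ℝ} (ha1 : ∀ m, a m ≤ 1)
    (ha0 : 1 / 2 ≤ a 0) (hanti : ∀ m n, 1 ≤ m → m ≤ n → a n ≤ a m) {αinv : ℝ → ℝ≥0∞}
    (hαinv : ∀ u, αinv u = sInf ((fun m : ℕ => (m : ℝ≥0∞)) '' {m | a m ≤ u})) {h : ℝ} (hh : 0 < h)
    (hinteg : ∫⁻ u in Set.Ioc (0 : ℝ) 1, (αinv u) ^ h ∂volume < ⊤) :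
    ∃ C : ℝ, 0 ≤ C ∧ ∀ m : ℕ, 1 ≤ m → a m * (m : ℝ) ^ h ≤ C := by
  set I := ∫⁻ u in Set.Ioc (0 : ℝ) 1, (αinv u) ^ h ∂volume with hI
  refine ⟨2 * I.toReal, by positivity, fun m hm => ?_⟩
  have hm' : (0 : ℝ) < m := by exact_mod_cast hm
  rcases le_or_gt (a m) 0 with hneg | hpos
  · exact (mul_nonpos_of_nonpos_of_nonneg hneg (by positivity)).trans (by positivity)
  have hinv : ∀ u ∈ Ioo 0 (a m / 2), (m : ℝ≥0∞) ≤ αinv u := by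
    intro u hu
    rw [hαinv]
    refine le_sInf ?_
    rintro _ ⟨q, hq, rfl⟩
    have hq' : a q ≤ u := hq
    have hu2 := hu.2
    have hmq : m ≤ q := by
      by_contra hlt
      rcases Nat.eq_zero_or_pos q with rfl | hq1
      · have := ha1 m; linarith
      · have := hanti q m hq1 (by omega)
        linarith
    show (m : ℝ≥0∞) ≤ (q : ℝ≥0∞)
    exact_mod_cast hmq
  have h1 : ENNReal.ofReal (a m / 2 * (m : ℝ) ^ h) ≤ I := by
    calc ENNReal.ofReal (a m / 2 * (m : ℝ) ^ h)
        = ∫⁻ _ in Ioo 0 (a m / 2), (m : ℝ≥0∞) ^ h := by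
          rw [setLIntegral_const, Real.volume_Ioo, sub_zero, ENNReal.ofReal_mul (by positivity),
            mul_comm, ← ENNReal.ofReal_rpow_of_pos hm', ENNReal.ofReal_natCast]
      _ ≤ ∫⁻ u in Ioo 0 (a m / 2), (αinv u) ^ h :=
          setLIntegral_mono' measurableSet_Ioo fun u hu =>
            ENNReal.rpow_le_rpow (hinv u hu) hh.le
      _ ≤ I := lintegral_mono_set fun u hu => ⟨hu.1, by
          have := ha1 m; have := hu.2; linarith⟩
  have h2 := (ENNReal.ofReal_le_iff_le_toReal hinteg.ne).1 h1
  linarith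

/-- The truncation of a sequence after its first `n` terms. -/
def truncSeq {E : Type*} (e : E) (n : ℕ) (z : ℕ → E) : ℕ → E := fun l => if l < n then z l else e

lemma measurable_truncSeq {E : Type*} [MeasurableSpace E] (e : E) (n : ℕ) :
    Measurable (truncSeq e n) := by
  refine measurable_pi_iff.2 fun l => ?_
  by_cases hl : l < n
  · simpa [truncSeq, hl] using measurable_pi_apply l
  · simp [truncSeq, hl]

lemma measurable_comp_truncSeq_shift {Ω E : Type*} [MeasurableSpace E] {X : Ω → ℕ → E} (e : E)
    (n s : ℕ) {S : Set ℕ} (hS : ∀ l < n, l + s ∈ S)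
    {F : (ℕ → E) → ℝ} (hF : Measurable F) :
    Measurable[⨆ kk ∈ S, MeasurableSpace.comap (fun ω => X ω kk) inferInstance]
      fun ω => F (truncSeq e n fun i => X ω (i + s)) := by
  let _ : MeasurableSpace Ω := ⨆ kk ∈ S, MeasurableSpace.comap (fun ω => X ω kk) inferInstance
  refine hF.comp (measurable_pi_iff.2 fun l => ?_)
  by_cases hl : l < n
  · simp only [truncSeq, hl, if_true]
    refine Measurable.mono (comap_measurable fun ω => X ω (l + s)) ?_ le_rfl
    exact le_iSup₂_of_le (f := fun kk (_ : kk ∈ S) =>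
      MeasurableSpace.comap (fun ω => X ω kk) inferInstance) (l + s) (hS l hl) le_rfl
  · simp only [truncSeq, hl, if_false]
    exact measurable_const

section StationaryProcess

variable {Ω E : Type*} [mΩ : MeasurableSpace Ω] [MeasurableSpace E] {P : Measure Ω}
  {X : Ω → ℕ → E}

/-- The law of a stationary process is invariant under all shifts. -/
lemma map_shift_eq_of_stationary (hX : Measurable X)
    (hstat : Measure.map (fun ω => fun i => X ω (i + 1)) P = Measure.map X P) (m : ℕ) :
    Measure.map (fun ω => fun i => X ω (i + m)) P = Measure.map X P := by
  induction m with
  | zero => rfl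
  | succ m ih =>
    have hT : Measurable fun z : ℕ → E => fun i => z (i + 1) :=
      measurable_pi_iff.2 fun i => measurable_pi_apply _
    have hXm : Measurable fun ω => fun i => X ω (i + m) :=
      measurable_pi_iff.2 fun i => (measurable_pi_apply _).comp hX
    have h1 : (fun ω => fun i => X ω (i + (m + 1))) =
        (fun z : ℕ → E => fun i => z (i + 1)) ∘ fun ω => fun i => X ω (i + m) := by
      funext ω i
      simp only [Function.comp_apply]
      congr 1; ring
    rw [h1, ← Measure.map_map hT hXm, ih, Measure.map_map hT hX]
    exact hstat

lemma lintegral_shift_eq_of_stationary (hX : Measurable X)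
    (hstat : Measure.map (fun ω => fun i => X ω (i + 1)) P = Measure.map X P)
    {F : (ℕ → E) → ℝ≥0∞} (hF : Measurable F) (m : ℕ) :
    ∫⁻ ω, F (fun i => X ω (i + m)) ∂P = ∫⁻ ω, F (X ω) ∂P := by
  have hXm : Measurable fun ω => fun i => X ω (i + m) :=
    measurable_pi_iff.2 fun i => (measurable_pi_apply _).comp hX
  rw [← lintegral_map hF hX, ← map_shift_eq_of_stationary hX hstat m, lintegral_map hF hXm]

/-- The set of defects of independence between the past up to time `i` and the future from time
`i + m` on; its supremum is a Rosenblatt mixing coefficient. -/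
def mixingDefects (P : Measure Ω) (X : Ω → ℕ → E) (i m : ℕ) : Set ℝ :=
  {r : ℝ | ∃ A B : Set Ω,
    MeasurableSet[⨆ kk ∈ Set.Iic i,
      MeasurableSpace.comap (fun ω => X ω kk) inferInstance] A ∧
    MeasurableSet[⨆ jj ∈ Set.Ici (i + m),
      MeasurableSpace.comap (fun ω => X ω jj) inferInstance] B ∧
    r = |(P A).toReal * (P B).toReal - (P (A ∩ B)).toReal|}

lemma mem_Icc_of_mem_mixingDefects [IsProbabilityMeasure P] {i m : ℕ} {r : ℝ}
    (hr : r ∈ mixingDefects P X i m) : r ∈ Icc 0 1 := by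
  obtain ⟨A, B, -, -, rfl⟩ := hr
  refine ⟨abs_nonneg _, ?_⟩
  have h1 : ∀ S : Set Ω, 0 ≤ (P S).toReal ∧ (P S).toReal ≤ 1 := fun S =>
    ⟨ENNReal.toReal_nonneg, ENNReal.toReal_le_of_le_ofReal zero_le_one (by simpa using prob_le_one)⟩
  have hA := h1 A
  have hB := h1 B
  have hAB := h1 (A ∩ B)
  have h2 : (P A).toReal * (P B).toReal ≤ 1 := mul_le_one₀ hA.2 hB.1 hB.2
  have h3 := mul_nonneg hA.1 hB.1
  rw [abs_le]
  constructor <;> linarith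

lemma bddAbove_mixingDefects [IsProbabilityMeasure P] (i m : ℕ) :
    BddAbove (mixingDefects P X i m) :=
  ⟨1, fun _ hr => (mem_Icc_of_mem_mixingDefects hr).2⟩

lemma nonempty_mixingDefects (i m : ℕ) : (mixingDefects P X i m).Nonempty :=
  ⟨_, ∅, ∅, @MeasurableSet.empty _ (_), @MeasurableSet.empty _ (_), rfl⟩

lemma sSup_mixingDefects_le_one [IsProbabilityMeasure P] (i m : ℕ) :
    sSup (mixingDefects P X i m) ≤ 1 :=
  csSup_le (nonempty_mixingDefects i m) fun _ hr => (mem_Icc_of_mem_mixingDefects hr).2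

lemma bddAbove_range_sSup_mixingDefects [IsProbabilityMeasure P] (m : ℕ) :
    BddAbove (range fun i => sSup (mixingDefects P X i m)) := by
  refine ⟨1, ?_⟩
  rintro _ ⟨i, rfl⟩
  exact sSup_mixingDefects_le_one i m

lemma iSup_sSup_mixingDefects_le_one [IsProbabilityMeasure P] (m : ℕ) :
    ⨆ i, sSup (mixingDefects P X i m) ≤ 1 :=
  ciSup_le fun i => sSup_mixingDefects_le_one i m

lemma iSup_sSup_mixingDefects_anti [IsProbabilityMeasure P] {m n : ℕ} (hmn : m ≤ n) :
    ⨆ i, sSup (mixingDefects P X i n) ≤ ⨆ i, sSup (mixingDefects P X i m) := by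
  refine ciSup_mono (bddAbove_range_sSup_mixingDefects m) fun i => ?_
  refine csSup_le_csSup (bddAbove_mixingDefects i m) (nonempty_mixingDefects i n) ?_
  rintro r ⟨A, B, hA, hB, rfl⟩
  refine ⟨A, B, hA, ?_, rfl⟩
  refine (iSup₂_le fun j hj => ?_ : (⨆ jj ∈ Set.Ici (i + n),
    MeasurableSpace.comap (fun ω => X ω jj) inferInstance) ≤ _) B hB
  exact le_iSup₂_of_le (f := fun jj (_ : jj ∈ Set.Ici (i + m)) =>
    MeasurableSpace.comap (fun ω => X ω jj) inferInstance) j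
    (le_trans (by omega : i + m ≤ i + n) hj) le_rfl

lemma measure_inter_le_of_mixing [IsProbabilityMeasure P] (i m : ℕ) {A B : Set Ω}
    (hA : MeasurableSet[⨆ kk ∈ Set.Iic i,
      MeasurableSpace.comap (fun ω => X ω kk) inferInstance] A)
    (hB : MeasurableSet[⨆ jj ∈ Set.Ici (i + m),
      MeasurableSpace.comap (fun ω => X ω jj) inferInstance] B) :
    P (A ∩ B) ≤ P A * P B + ENNReal.ofReal (⨆ i, sSup (mixingDefects P X i m)) := by
  have hmem : |(P A).toReal * (P B).toReal - (P (A ∩ B)).toReal| ∈ mixingDefects P X i m :=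
    ⟨A, B, hA, hB, rfl⟩
  have h1 := (le_csSup (bddAbove_mixingDefects i m) hmem).trans
    (le_ciSup (bddAbove_range_sSup_mixingDefects (P := P) (X := X) m) i)
  have h2 := (abs_nonneg _).trans h1
  rw [abs_le] at h1
  rw [← ENNReal.ofReal_toReal (measure_ne_top P (A ∩ B)),
    ← ENNReal.ofReal_toReal (measure_ne_top P A), ← ENNReal.ofReal_toReal (measure_ne_top P B),
    ← ENNReal.ofReal_mul ENNReal.toReal_nonneg, ← ENNReal.ofReal_add (by positivity) h2]
  exact ENNReal.ofReal_le_ofReal (by linarith [h1.1])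

lemma iSup_comap_le (hX : Measurable X) (S : Set ℕ) :
    (⨆ kk ∈ S, MeasurableSpace.comap (fun ω => X ω kk) inferInstance) ≤ mΩ :=
  iSup₂_le fun l _ => ((measurable_pi_apply l).comp hX).comap_le

/-- Almost surely, the empirical exponential moments along disjoint blocks of a stationary process
are not exponentially larger than their mean. -/
lemma ae_eventually_average_exp_le (hX : Measurable X)
    (hstat : Measure.map (fun ω => fun i => X ω (i + 1)) P = Measure.map X P)
    {V : ℕ → (ℕ → E) → ℝ} (hV : ∀ n, Measurable (V n)) {k : ℕ → ℕ} (hk : ∀ n, 0 < k n) {a : ℝ}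
    (hI : ∀ ε > 0, ∀ᶠ n : ℕ in atTop,
      ∫⁻ ω, ENNReal.ofReal (Real.exp (V n (X ω))) ∂P ≤ ENNReal.ofReal (Real.exp (n * (a + ε))))
    {ε : ℝ} (hε : 0 < ε) :
    ∀ᵐ ω ∂P, ∀ᶠ n : ℕ in atTop, (k n : ℝ)⁻¹ * ∑ j ∈ Finset.range (k n),
      Real.exp (V n fun i => X ω (i + j * n)) ≤ Real.exp (n * (a + ε)) := by
  have hbad : ∀ᶠ n : ℕ in atTop, P {ω | Real.exp (n * (a + ε)) ≤ (k n : ℝ)⁻¹ *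
      ∑ j ∈ Finset.range (k n), Real.exp (V n fun i => X ω (i + j * n))} ≤
      ENNReal.ofReal (1 * Real.exp (-(ε / 2 * n))) := by
    filter_upwards [hI (ε / 2) (by positivity)] with n hn
    have hkn : (0 : ℝ) < k n := by exact_mod_cast hk n
    have hVm : ∀ j, Measurable fun ω =>
        ENNReal.ofReal (Real.exp (V n fun i => X ω (i + j * n))) := fun j =>
      ENNReal.measurable_ofReal.comp (Real.measurable_exp.comp ((hV n).comp
        (measurable_pi_iff.2 fun i => (measurable_pi_apply _).comp hX)))
    have hF : Measurable fun z => ENNReal.ofReal (Real.exp (V n z)) :=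
      ENNReal.measurable_ofReal.comp (Real.measurable_exp.comp (hV n))
    have hsum : ∀ ω, ENNReal.ofReal ((k n : ℝ)⁻¹ * ∑ j ∈ Finset.range (k n),
        Real.exp (V n fun i => X ω (i + j * n))) = ENNReal.ofReal ((k n : ℝ)⁻¹) *
        ∑ j ∈ Finset.range (k n), ENNReal.ofReal (Real.exp (V n fun i => X ω (i + j * n))) := by
      intro ω
      rw [ENNReal.ofReal_mul (by positivity), ENNReal.ofReal_sum_of_nonneg]
      exact fun j _ => (Real.exp_pos _).le
    have hmean : ∫⁻ ω, ENNReal.ofReal ((k n : ℝ)⁻¹ * ∑ j ∈ Finset.range (k n),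
        Real.exp (V n fun i => X ω (i + j * n))) ∂P =
        ∫⁻ ω, ENNReal.ofReal (Real.exp (V n (X ω))) ∂P := by
      simp_rw [hsum]
      rw [lintegral_const_mul _ (Finset.measurable_fun_sum _ fun j _ => hVm j),
        lintegral_finsetSum _ fun j _ => hVm j]
      simp_rw [lintegral_shift_eq_of_stationary hX hstat hF]
      rw [Finset.sum_const, Finset.card_range, nsmul_eq_mul, ← mul_assoc,
        ← ENNReal.ofReal_natCast (k n), ← ENNReal.ofReal_mul (by positivity),
        inv_mul_cancel₀ hkn.ne', ENNReal.ofReal_one, one_mul]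
    have hmarkov := meas_ge_le_lintegral_div (μ := P)
      (f := fun ω => ENNReal.ofReal ((k n : ℝ)⁻¹ * ∑ j ∈ Finset.range (k n),
        Real.exp (V n fun i => X ω (i + j * n))))
      (Measurable.aemeasurable (by
        simp_rw [hsum]
        exact (Finset.measurable_fun_sum _ fun j _ => hVm j).const_mul _))
      (ε := ENNReal.ofReal (Real.exp (n * (a + ε)))) (by simpa using Real.exp_pos _)
      ENNReal.ofReal_ne_top
    refine (measure_mono fun ω hω => ?_).trans (hmarkov.trans ?_)
    · exact ENNReal.ofReal_le_ofReal hω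
    · rw [hmean]
      refine (ENNReal.div_le_div_right hn _).trans ?_
      rw [← ENNReal.ofReal_div_of_pos (Real.exp_pos _), ← Real.exp_sub]
      apply ENNReal.ofReal_le_ofReal
      rw [one_mul]
      apply Real.exp_le_exp.2
      apply le_of_eq; ring
  filter_upwards [ae_eventually_notMem_of_le_exp (by positivity : 0 < ε / 2) hbad] with ω hω
  filter_upwards [hω] with n hn
  exact (not_le.1 hn).le

end StationaryProcess

/-- If the exponential moments of `Y n` and of `(1 + t) • Y n` have exponential rates `a` and `a'`
with `a' < a + t * b`, then truncating `exp (Y n)` at level `exp (n * b)` does not change the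
exponential rate of its mean. -/
lemma eventually_exp_le_integral_min {Ω : Type*} [MeasurableSpace Ω] {P : Measure Ω}
    [IsProbabilityMeasure P] {Y : ℕ → Ω → ℝ} (hY : ∀ n, Measurable (Y n)) {a a' b t δ : ℝ}
    (hδ : 0 < δ) (ht : 0 ≤ t) (hab : a' + 4 * δ ≤ a + t * b)
    (hI : ∀ᶠ n : ℕ in atTop, ENNReal.ofReal (Real.exp (n * (a - δ))) ≤
      ∫⁻ ω, ENNReal.ofReal (Real.exp (Y n ω)) ∂P)
    (hJ : ∀ᶠ n : ℕ in atTop, ∫⁻ ω, ENNReal.ofReal (Real.exp ((1 + t) * Y n ω)) ∂P ≤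
      ENNReal.ofReal (Real.exp (n * (a' + δ)))) :
    ∀ᶠ n : ℕ in atTop, Real.exp (n * (a - 2 * δ)) ≤
      ∫ ω, min (Real.exp (Y n ω)) (Real.exp (n * b)) ∂P := by
  have hlarge : ∀ᶠ n : ℕ in atTop, 1 ≤ n * δ := by
    filter_upwards [(tendsto_natCast_atTop_atTop.atTop_mul_const hδ).eventually_ge_atTop 1]
      with n hn using hn
  filter_upwards [hI, hJ, hlarge] with n hIn hJn hn
  set Z : Ω → ℝ := fun ω => min (Real.exp (Y n ω)) (Real.exp (n * b)) with hZ
  have hZm : Measurable Z := (Real.measurable_exp.comp (hY n)).min measurable_const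
  have hZm' : Measurable fun ω => ENNReal.ofReal (Z ω) := ENNReal.measurable_ofReal.comp hZm
  have hZ0 : ∀ ω, 0 ≤ Z ω := fun ω => le_min (Real.exp_pos _).le (Real.exp_pos _).le
  have hZint : Integrable Z P := Integrable.of_bound hZm.aestronglyMeasurable (Real.exp (n * b))
    (ae_of_all _ fun ω => by
      rw [Real.norm_eq_abs, abs_of_nonneg (hZ0 ω)]; exact min_le_right _ _)
  have hpt : ∀ ω, ENNReal.ofReal (Real.exp (Y n ω)) ≤ ENNReal.ofReal (Z ω) +
      ENNReal.ofReal (Real.exp (-(t * (n * b)))) *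
        ENNReal.ofReal (Real.exp ((1 + t) * Y n ω)) := by
    intro ω
    rw [← ENNReal.ofReal_mul (Real.exp_pos _).le, ← Real.exp_add,
      ← ENNReal.ofReal_add (hZ0 ω) (Real.exp_pos _).le]
    apply ENNReal.ofReal_le_ofReal
    rcases le_or_gt (Y n ω) (n * b) with h | h
    · have : Z ω = Real.exp (Y n ω) := min_eq_left (Real.exp_le_exp.2 h)
      rw [this]
      linarith [Real.exp_pos (-(t * (n * b)) + (1 + t) * Y n ω)]
    · have h1 : Real.exp (Y n ω) ≤ Real.exp (-(t * (n * b)) + (1 + t) * Y n ω) :=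
        Real.exp_le_exp.2 (by nlinarith)
      linarith [hZ0 ω]
  have hle : ENNReal.ofReal (Real.exp (n * (a - δ))) ≤ ENNReal.ofReal (∫ ω, Z ω ∂P) +
      ENNReal.ofReal (Real.exp (n * (a - 3 * δ))) := by
    calc ENNReal.ofReal (Real.exp (n * (a - δ)))
        ≤ ∫⁻ ω, (ENNReal.ofReal (Z ω) + ENNReal.ofReal (Real.exp (-(t * (n * b)))) *
          ENNReal.ofReal (Real.exp ((1 + t) * Y n ω))) ∂P := hIn.trans (lintegral_mono hpt)
      _ = ENNReal.ofReal (∫ ω, Z ω ∂P) + ENNReal.ofReal (Real.exp (-(t * (n * b)))) *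
          ∫⁻ ω, ENNReal.ofReal (Real.exp ((1 + t) * Y n ω)) ∂P := by
          rw [lintegral_add_left hZm',
            lintegral_const_mul' _ _ ENNReal.ofReal_ne_top,
            ofReal_integral_eq_lintegral_ofReal hZint (ae_of_all _ hZ0)]
      _ ≤ _ := by
          gcongr
          refine (mul_le_mul_right hJn _).trans ?_
          rw [← ENNReal.ofReal_mul (Real.exp_pos _).le, ← Real.exp_add]
          apply ENNReal.ofReal_le_ofReal
          apply Real.exp_le_exp.2
          have : (n : ℝ) * (a' + 4 * δ) ≤ n * (a + t * b) := by gcongr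
          linarith
  rw [← ENNReal.ofReal_add (integral_nonneg hZ0) (Real.exp_pos _).le,
    ENNReal.ofReal_le_ofReal_iff (add_nonneg (integral_nonneg hZ0) (Real.exp_pos _).le)] at hle
  have hy : 2 ≤ Real.exp (n * δ) := by
    have := Real.add_one_le_exp (n * δ); linarith
  have e1 : Real.exp (n * (a - δ)) =
      Real.exp (n * (a - 3 * δ)) * (Real.exp (n * δ) * Real.exp (n * δ)) := by
    rw [← Real.exp_add, ← Real.exp_add]; congr 1; ring
  have e2 : Real.exp (n * (a - 2 * δ)) = Real.exp (n * (a - 3 * δ)) * Real.exp (n * δ) := by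
    rw [← Real.exp_add]; congr 1; ring
  rw [e1] at hle
  rw [e2]
  nlinarith [Real.exp_pos (n * (a - 3 * δ)), mul_nonneg (Real.exp_pos (n * (a - 3 * δ))).le
    (show 0 ≤ Real.exp (n * δ) * Real.exp (n * δ) - Real.exp (n * δ) - 1 by nlinarith)]

/-- Almost surely, the empirical exponential moments along blocks of a rapidly mixing stationary
process are not exponentially smaller than their mean, provided there are sufficiently many
blocks. -/
lemma ae_eventually_exp_le_average {Ω E : Type*} [mΩ : MeasurableSpace Ω] [MeasurableSpace E]
    {P : Measure Ω} [IsProbabilityMeasure P] {X : Ω → ℕ → E} (hX : Measurable X)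
    (hstat : Measure.map (fun ω => fun i => X ω (i + 1)) P = Measure.map X P)
    (hmix : ∀ h : ℝ, 0 < h → ∃ C : ℝ, 0 ≤ C ∧
      ∀ m : ℕ, 1 ≤ m → (⨆ i, sSup (mixingDefects P X i m)) * (m : ℝ) ^ h ≤ C)
    {V : ℕ → (ℕ → E) → ℝ} (hV : ∀ n, Measurable (V n)) (e : E)
    (happ : ∀ ε > 0, ∀ᶠ n : ℕ in atTop, ∀ z, |V n z - V n (truncSeq e (2 * n) z)| ≤ n * ε)
    {k : ℕ → ℕ} (hk : ∀ n, 0 < k n) {a a' b t κ : ℝ} (ht : 0 < t)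
    (hI : ∀ ε > 0, ∀ᶠ n : ℕ in atTop, ENNReal.ofReal (Real.exp (n * (a - ε))) ≤
      ∫⁻ ω, ENNReal.ofReal (Real.exp (V n (X ω))) ∂P)
    (hJ : ∀ ε > 0, ∀ᶠ n : ℕ in atTop, ∫⁻ ω, ENNReal.ofReal (Real.exp ((1 + t) * V n (X ω))) ∂P ≤
      ENNReal.ofReal (Real.exp (n * (a' + ε))))
    (hab : a' < a + t * b) (hbκ : b - a < κ) (hkκ : ∀ᶠ n : ℕ in atTop, Real.exp (n * κ) ≤ k n)
    {ε : ℝ} (hε : 0 < ε) :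
    ∀ᵐ ω ∂P, ∀ᶠ n : ℕ in atTop, Real.exp (n * (a - ε)) ≤ (k n : ℝ)⁻¹ *
      ∑ j ∈ Finset.range (k n), Real.exp (V n fun i => X ω (i + j * n)) := by
  set γ := κ - (b - a) with hγ
  have hγ0 : 0 < γ := by rw [hγ]; linarith
  obtain ⟨δ, hδ0, hδε, hδγ, hδt⟩ : ∃ δ > 0, 5 * δ ≤ ε ∧ 8 * δ ≤ γ ∧ a' + 4 * δ ≤ a + t * b := by
    refine ⟨min (ε / 5) (min (γ / 8) ((a + t * b - a') / 4)), ?_, ?_, ?_, ?_⟩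
    · have : 0 < a + t * b - a' := by linarith
      positivity
    · have := min_le_left (ε / 5) (min (γ / 8) ((a + t * b - a') / 4)); linarith
    · have := (min_le_right (ε / 5) (min (γ / 8) ((a + t * b - a') / 4))).trans (min_le_left _ _)
      linarith
    · have := (min_le_right (ε / 5) (min (γ / 8) ((a + t * b - a') / 4))).trans (min_le_right _ _)
      linarith
  set η := γ / 4 with hη
  have hη0 : 0 < η := by positivity
  set h := (2 * |b - a + 3 * δ| + γ) / η with hh
  have hh0 : 0 < h := by positivity
  have hhη : h * η = 2 * |b - a + 3 * δ| + γ := by rw [hh]; field_simp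
  obtain ⟨C, hC0, hC⟩ := hmix h hh0
  have hmean := eventually_exp_le_integral_min (P := P) (fun n => (hV n).comp hX) hδ0 ht.le hδt
    (hI δ hδ0) (hJ δ hδ0)
  -- the truncated block functional
  set G : ℕ → (ℕ → E) → ℝ := fun n z => min (Real.exp (V n z)) (Real.exp (n * b)) with hG
  have hGm : ∀ n, Measurable (G n) := fun n =>
    (Real.measurable_exp.comp (hV n)).min measurable_const
  set W : ℕ → ℕ → Ω → ℝ := fun n j ω => G n (truncSeq e (2 * n) fun i => X ω (i + j * n)) with hW
  have hWm : ∀ n j, Measurable (W n j) := fun n j => (hGm n).comp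
    ((measurable_truncSeq e (2 * n)).comp
      (measurable_pi_iff.2 fun i => (measurable_pi_apply _).comp hX))
  have hW0 : ∀ n j ω, 0 ≤ W n j ω := fun n j ω => le_min (Real.exp_pos _).le (Real.exp_pos _).le
  have hWM : ∀ n j ω, W n j ω ≤ Real.exp (n * b) := fun n j ω => min_le_right _ _
  set q : ℕ → ℝ := fun n => ∫ ω, G n (truncSeq e (2 * n) (X ω)) ∂P with hq
  have hWlint : ∀ n j, ∫⁻ ω, ENNReal.ofReal (W n j ω) ∂P =
      ∫⁻ ω, ENNReal.ofReal (G n (truncSeq e (2 * n) (X ω))) ∂P := fun n j =>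
    lintegral_shift_eq_of_stationary hX hstat
      (F := fun z => ENNReal.ofReal (G n (truncSeq e (2 * n) z)))
      (ENNReal.measurable_ofReal.comp ((hGm n).comp (measurable_truncSeq e (2 * n)))) (j * n)
  have hWq : ∀ n j, ∫ ω, W n j ω ∂P = q n := by
    intro n j
    have hm : Measurable fun ω => G n (truncSeq e (2 * n) (X ω)) :=
      (hGm n).comp ((measurable_truncSeq e (2 * n)).comp hX)
    rw [integral_eq_lintegral_of_nonneg_ae (ae_of_all _ (hW0 n j)) (hWm n j).aestronglyMeasurable,
      hWlint]
    exact (integral_eq_lintegral_of_nonneg_ae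
      (ae_of_all _ fun ω => le_min (Real.exp_pos _).le (Real.exp_pos _).le)
      hm.aestronglyMeasurable).symm
  have hWlint' : ∀ n j, ∫⁻ ω, ENNReal.ofReal (W n j ω) ∂P = ENNReal.ofReal (q n) := by
    intro n j
    rw [← hWq n j, ofReal_integral_eq_lintegral_ofReal _ (ae_of_all _ (hW0 n j))]
    exact Integrable.of_bound (hWm n j).aestronglyMeasurable (Real.exp (n * b))
      (ae_of_all _ fun ω => by
        rw [Real.norm_eq_abs, abs_of_nonneg (hW0 n j ω)]; exact hWM n j ω)
  have hGapp : ∀ᶠ n : ℕ in atTop, ∀ z, Real.exp (-(n * δ)) * G n z ≤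
      G n (truncSeq e (2 * n) z) := by
    filter_upwards [happ δ hδ0] with n hn z
    refine le_min ?_ ?_
    · calc Real.exp (-(n * δ)) * G n z ≤ Real.exp (-(n * δ)) * Real.exp (V n z) := by
            gcongr; exact min_le_left _ _
        _ ≤ _ := by
            rw [← Real.exp_add]; exact Real.exp_le_exp.2 (by linarith [(abs_le.1 (hn z)).2])
    · calc Real.exp (-(n * δ)) * G n z ≤ 1 * Real.exp (n * b) := by
            have : 0 ≤ (n : ℝ) * δ := by positivity
            exact mul_le_mul (Real.exp_le_one_iff.2 (by linarith)) (min_le_right _ _)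
              (le_min (Real.exp_pos _).le (Real.exp_pos _).le) zero_le_one
        _ = _ := one_mul _
  have hqlow : ∀ᶠ n : ℕ in atTop, Real.exp (n * (a - 3 * δ)) ≤ q n := by
    filter_upwards [hmean, hGapp] with n hn1 hn2
    have hb : ∀ {f : Ω → ℝ}, Measurable f → (∀ ω, 0 ≤ f ω) → (∀ ω, f ω ≤ Real.exp (n * b)) →
        Integrable f P := fun {f} hf h0 hM => Integrable.of_bound hf.aestronglyMeasurable
      (Real.exp (n * b)) (ae_of_all _ fun ω => by
        rw [Real.norm_eq_abs, abs_of_nonneg (h0 ω)]; exact hM ω)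
    have h0 : ∀ z, 0 ≤ G n z := fun z => le_min (Real.exp_pos _).le (Real.exp_pos _).le
    calc Real.exp (n * (a - 3 * δ)) = Real.exp (-(n * δ)) * Real.exp (n * (a - 2 * δ)) := by
          rw [← Real.exp_add]; congr 1; ring
      _ ≤ Real.exp (-(n * δ)) * ∫ ω, G n (X ω) ∂P :=
          mul_le_mul_of_nonneg_left hn1 (Real.exp_pos _).le
      _ = ∫ ω, Real.exp (-(n * δ)) * G n (X ω) ∂P := (integral_const_mul _ _).symm
      _ ≤ q n := integral_mono
          ((hb ((hGm n).comp hX) (fun ω => h0 _) fun ω => min_le_right _ _).const_mul _)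
          (hb ((hGm n).comp ((measurable_truncSeq e (2 * n)).comp hX)) (fun ω => h0 _)
            fun ω => min_le_right _ _) fun ω => hn2 _
  set L : ℕ → ℕ := fun n => ⌈Real.exp (n * η)⌉₊ + 2 with hL
  set β : ℕ → ℝ := fun n => C * Real.exp (-(h * η * n)) with hβ
  have hcov : ∀ᶠ n : ℕ in atTop, ∀ i j, i + L n ≤ j →
      ∫ ω, W n i ω * W n j ω ∂P ≤ q n ^ 2 + Real.exp (n * b) ^ 2 * β n := by
    filter_upwards [eventually_ge_atTop 1, hqlow] with n hn1 hqn i j hij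
    have hq0 : 0 ≤ q n := (Real.exp_pos _).le.trans hqn
    set g := (j - i - 2) * n with hg
    have hceil : 0 < ⌈Real.exp (n * η)⌉₊ := Nat.ceil_pos.2 (Real.exp_pos _)
    have hji : ⌈Real.exp (n * η)⌉₊ ≤ j - i - 2 := by simp only [hL] at hij; omega
    have hg1 : ⌈Real.exp (n * η)⌉₊ ≤ g := hji.trans (Nat.le_mul_of_pos_right _ hn1)
    have hgexp : Real.exp (n * η) ≤ g := (Nat.le_ceil _).trans (by exact_mod_cast hg1)
    have hjn : i * n + 2 * n + g = j * n := by
      rw [hg, ← add_mul, ← add_mul]; congr 1; omega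
    have hα : (⨆ i, sSup (mixingDefects P X i g)) ≤ β n := by
      have h1 := hC g (hceil.trans_le hg1)
      have h2 : Real.exp (h * η * n) ≤ (g : ℝ) ^ h := by
        calc Real.exp (h * η * n) = Real.exp (n * η) ^ h := by
              rw [← Real.exp_mul]; congr 1; ring
          _ ≤ _ := Real.rpow_le_rpow (Real.exp_pos _).le hgexp hh0.le
      have h3 : 0 < (g : ℝ) ^ h := (Real.exp_pos _).trans_le h2
      calc (⨆ i, sSup (mixingDefects P X i g)) ≤ C / (g : ℝ) ^ h := (le_div_iff₀ h3).2 h1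
        _ ≤ C / Real.exp (h * η * n) := by gcongr
        _ = β n := by rw [hβ]; simp only [Real.exp_neg]; rfl
    have key := lintegral_mul_le_of_measure_inter_le (P := P)
      (iSup_comap_le hX (Set.Iic (i * n + 2 * n)))
      (iSup_comap_le hX (Set.Ici (i * n + 2 * n + g)))
      (fun A B hA hB => measure_inter_le_of_mixing (i * n + 2 * n) g hA hB)
      (measurable_comp_truncSeq_shift e (2 * n) (i * n)
        (fun l hl => by simp only [mem_Iic]; omega) (hGm n))
      (measurable_comp_truncSeq_shift e (2 * n) (j * n)
        (fun l hl => by simp only [mem_Ici]; omega) (hGm n))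
      (hW0 n i) (hW0 n j) (hWM n i) (hWM n j)
    rw [integral_eq_lintegral_of_nonneg_ae
      (ae_of_all _ fun ω => mul_nonneg (hW0 n i ω) (hW0 n j ω))
      ((hWm n i).mul (hWm n j)).aestronglyMeasurable]
    refine ENNReal.toReal_le_of_le_ofReal (by positivity) (key.trans ?_)
    have e1 : ∀ i, ∫⁻ ω, ENNReal.ofReal (G n (truncSeq e (2 * n) fun l => X ω (l + i * n))) ∂P =
        ENNReal.ofReal (q n) := hWlint' n
    rw [e1, e1, ← ENNReal.ofReal_mul hq0]
    refine (add_le_add le_rfl (mul_le_mul_right (mul_le_mul_right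
      (ENNReal.ofReal_le_ofReal hα) _) _)).trans ?_
    rw [← ENNReal.ofReal_mul (Real.exp_pos _).le, ← ENNReal.ofReal_mul (Real.exp_pos _).le,
      ← ENNReal.ofReal_add (by positivity) (by positivity)]
    exact ENNReal.ofReal_le_ofReal (le_of_eq (by ring))
  have hbad : ∀ᶠ n : ℕ in atTop,
      P {ω | (k n : ℝ)⁻¹ * ∑ i ∈ Finset.range (k n), W n i ω < q n / 2} ≤
      ENNReal.ofReal ((32 + 4 * C) * Real.exp (-(3 * γ / 8 * n))) := by
    filter_upwards [hcov, hqlow, hkκ] with n hn hqn hkn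
    have hq0 : 0 < q n := (Real.exp_pos _).trans_le hqn
    have hn0 : (0 : ℝ) ≤ n := Nat.cast_nonneg n
    refine (measure_average_lt_half_mean_le (hk n) (hWm n) (hW0 n) (Real.exp_pos (n * b)).le hq0
      (β := β n) (by positivity) (hWM n) (hWq n) hn).trans (ENNReal.ofReal_le_ofReal ?_)
    have hratio : Real.exp (n * b) / q n ≤ Real.exp (n * (b - a + 3 * δ)) := by
      rw [div_le_iff₀ hq0]
      calc Real.exp (n * b) = Real.exp (n * (b - a + 3 * δ)) * Real.exp (n * (a - 3 * δ)) := by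
            rw [← Real.exp_add]; congr 1; ring
        _ ≤ _ := by gcongr
    have hkq : Real.exp (n * b) / (k n * q n) ≤
        Real.exp (n * (b - a + 3 * δ)) / Real.exp (n * κ) := by
      rw [mul_comm (k n : ℝ), ← div_div]
      gcongr
    have hLn : (L n : ℝ) ≤ 4 * Real.exp (n * η) := by
      have h1 := Nat.ceil_lt_add_one (Real.exp_pos (n * η)).le
      have h2 : 1 ≤ Real.exp (n * η) := Real.one_le_exp (by positivity)
      simp only [hL]; push_cast; linarith
    have hfirst : 2 * (L n : ℝ) * (Real.exp (n * b) / (k n * q n)) ≤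
        8 * Real.exp (-(3 * γ / 8 * n)) := by
      calc 2 * (L n : ℝ) * (Real.exp (n * b) / (k n * q n))
          ≤ 2 * (4 * Real.exp (n * η)) *
            (Real.exp (n * (b - a + 3 * δ)) / Real.exp (n * κ)) := by gcongr
        _ = 8 * Real.exp (n * η + (n * (b - a + 3 * δ) - n * κ)) := by
            rw [← Real.exp_sub, Real.exp_add]; ring
        _ ≤ _ := by
            gcongr
            have : (n : ℝ) * (η + (b - a + 3 * δ) - κ) ≤ n * (-(3 * γ / 8)) := by
              gcongr
              simp only [hη]; linarith
            linarith
    have hsecond : (Real.exp (n * b) / q n) ^ 2 * β n ≤ C * Real.exp (-(3 * γ / 8 * n)) := by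
      calc (Real.exp (n * b) / q n) ^ 2 * β n
          ≤ Real.exp (n * (b - a + 3 * δ)) ^ 2 * (C * Real.exp (-(h * η * n))) := by gcongr
        _ = C * Real.exp (2 * (n * (b - a + 3 * δ)) + -(h * η * n)) := by
            rw [Real.exp_add, two_mul, Real.exp_add]; ring
        _ ≤ _ := by
            gcongr
            rw [hhη]
            have h1 := le_abs_self (b - a + 3 * δ)
            have : (n : ℝ) * (2 * (b - a + 3 * δ) - (2 * |b - a + 3 * δ| + γ)) ≤
                n * (-(3 * γ / 8)) := by
              gcongr
              linarith
            linarith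
    linarith
  have hlarge : ∀ᶠ n : ℕ in atTop, 1 ≤ n * δ := by
    filter_upwards [(tendsto_natCast_atTop_atTop.atTop_mul_const hδ0).eventually_ge_atTop 1]
      with n hn using hn
  filter_upwards [ae_eventually_notMem_of_le_exp (by positivity : 0 < 3 * γ / 8) hbad] with ω hω
  filter_upwards [hω, hqlow, happ δ hδ0, hlarge] with n hn hqn hVn hnδ
  have h1 : q n / 2 ≤ (k n : ℝ)⁻¹ * ∑ i ∈ Finset.range (k n), W n i ω := not_lt.1 hn
  have h2 : ∀ i, Real.exp (-(n * δ)) * W n i ω ≤ Real.exp (V n fun l => X ω (l + i * n)) := by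
    intro i
    have h3 := hVn fun l => X ω (l + i * n)
    calc Real.exp (-(n * δ)) * W n i ω ≤ Real.exp (-(n * δ)) *
          Real.exp (V n (truncSeq e (2 * n) fun l => X ω (l + i * n))) := by
          gcongr; exact min_le_left _ _
      _ ≤ _ := by
          rw [← Real.exp_add]; exact Real.exp_le_exp.2 (by linarith [(abs_le.1 h3).1])
  have hn0 : (0 : ℝ) ≤ n := Nat.cast_nonneg n
  calc Real.exp (n * (a - ε)) ≤ Real.exp (n * (a - 5 * δ)) := by
        apply Real.exp_le_exp.2; gcongr
    _ = Real.exp (-(n * δ)) * (Real.exp (n * (a - 3 * δ)) * Real.exp (-(n * δ))) := by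
        rw [← Real.exp_add, ← Real.exp_add]; congr 1; ring
    _ ≤ Real.exp (-(n * δ)) * (Real.exp (n * (a - 3 * δ)) * (1 / 2)) := by
        gcongr
        rw [Real.exp_neg, inv_eq_one_div]
        have := Real.add_one_le_exp (n * δ)
        gcongr
        linarith
    _ ≤ Real.exp (-(n * δ)) * ((k n : ℝ)⁻¹ * ∑ i ∈ Finset.range (k n), W n i ω) := by
        refine mul_le_mul_of_nonneg_left ?_ (Real.exp_pos _).le
        linarith
    _ = (k n : ℝ)⁻¹ * ∑ i ∈ Finset.range (k n), Real.exp (-(n * δ)) * W n i ω := by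
        rw [← Finset.mul_sum]; ring
    _ ≤ _ := by
        gcongr with i _
        exact h2 i

/-- Convergence of scaled logarithms in `EReal`, expressed by exponential bounds. -/
lemma eventually_exp_le_and_le_exp_of_tendsto_log {I : ℕ → ℝ≥0∞} {L : ℝ}
    (h : Tendsto (fun n : ℕ => ((n : ℝ)⁻¹ : EReal) * ENNReal.log (I n)) atTop (𝓝 (L : EReal)))
    {ε : ℝ} (hε : 0 < ε) :
    ∀ᶠ n : ℕ in atTop, ENNReal.ofReal (Real.exp (n * (L - ε))) ≤ I n ∧
      I n ≤ ENNReal.ofReal (Real.exp (n * (L + ε))) := by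
  have hlow := h.eventually_const_lt (show ((L - ε : ℝ) : EReal) < L from
    EReal.coe_lt_coe_iff.2 (by linarith))
  have hup := h.eventually_lt_const (show (L : EReal) < ((L + ε : ℝ) : EReal) from
    EReal.coe_lt_coe_iff.2 (by linarith))
  filter_upwards [hlow, hup, eventually_ge_atTop 1] with n h1 h2 hn
  have hn0 : (0 : ℝ) < n := by exact_mod_cast hn
  rw [← EReal.coe_inv] at h1 h2
  have hinv : (0 : ℝ) < (n : ℝ)⁻¹ := inv_pos.2 hn0
  have hI0 : I n ≠ 0 := by
    intro h0
    rw [h0, ENNReal.log_zero, EReal.coe_mul_bot_of_pos hinv] at h1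
    exact not_lt_bot h1
  have hItop : I n ≠ ⊤ := by
    intro h0
    rw [h0, ENNReal.log_top, EReal.coe_mul_top_of_pos hinv] at h2
    exact not_top_lt h2
  rw [ENNReal.log_pos_real hI0 hItop, ← EReal.coe_mul, EReal.coe_lt_coe_iff] at h1 h2
  have hpos : 0 < (I n).toReal := ENNReal.toReal_pos hI0 hItop
  rw [inv_mul_eq_div, lt_div_iff₀ hn0] at h1
  rw [inv_mul_eq_div, div_lt_iff₀ hn0] at h2
  rw [ENNReal.ofReal_le_iff_le_toReal hItop, ENNReal.le_ofReal_iff_toReal_le hItop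
    (Real.exp_pos _).le]
  exact ⟨(Real.le_log_iff_exp_le hpos).1 (by linarith),
    (Real.log_le_iff_le_exp hpos).1 (by linarith)⟩

/-- Exponential bounds at all scales give convergence of the scaled logarithms. -/
lemma tendsto_inv_mul_log_of_exp_le_of_le_exp {A : ℕ → ℝ} {a : ℝ}
    (h : ∀ m : ℕ, ∀ᶠ n : ℕ in atTop, Real.exp (n * (a - 1 / ((m : ℝ) + 1))) ≤ A n ∧
      A n ≤ Real.exp (n * (a + 1 / ((m : ℝ) + 1)))) :
    Tendsto (fun n : ℕ => (n : ℝ)⁻¹ * Real.log (A n)) atTop (𝓝 a) := by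
  rw [Metric.tendsto_nhds]
  intro ε hε
  obtain ⟨m, hm⟩ := exists_nat_one_div_lt hε
  filter_upwards [h m, eventually_ge_atTop 1] with n hn hn1
  have hn0 : (0 : ℝ) < n := by exact_mod_cast hn1
  have hA : 0 < A n := (Real.exp_pos _).trans_le hn.1
  have h1 := (Real.le_log_iff_exp_le hA).2 hn.1
  have h2 := (Real.log_le_iff_le_exp hA).2 hn.2
  rw [Real.dist_eq, inv_mul_eq_div]
  refine lt_of_le_of_lt (abs_le.2 ⟨?_, ?_⟩) hm
  · have := (le_div_iff₀ hn0).2 ((mul_comm _ _).trans_le h1)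
    linarith
  · have := (div_le_iff₀ hn0).2 (h2.trans_eq (mul_comm _ _))
    linarith

/-- The exponential rate of the Laplace transforms of a sequence of random vectors is convex. -/
lemma convexOn_of_laplace_exp_bounds {Ω H : Type*} [MeasurableSpace Ω] {P : Measure Ω}
    [NormedAddCommGroup H] [InnerProductSpace ℝ H] {D : Set H} (hD : Convex ℝ D)
    {S : ℕ → Ω → H} (hS : ∀ n (x : H), Measurable fun ω => ⟪x, S n ω⟫) {L : H → ℝ}
    (hL : ∀ x ∈ D, ∀ ε > 0, ∀ᶠ n : ℕ in atTop, ENNReal.ofReal (Real.exp (n * (L x - ε))) ≤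
        ∫⁻ ω, ENNReal.ofReal (Real.exp ⟪x, S n ω⟫) ∂P ∧
      ∫⁻ ω, ENNReal.ofReal (Real.exp ⟪x, S n ω⟫) ∂P ≤
        ENNReal.ofReal (Real.exp (n * (L x + ε)))) :
    ConvexOn ℝ D L := by
  refine ⟨hD, fun x hx y hy p q hp hq hpq => ?_⟩
  have hz : p • x + q • y ∈ D := hD hx hy hp hq hpq
  refine le_of_forall_pos_le_add fun ε hε => ?_
  have hε2 : 0 < ε / 2 := by positivity
  obtain ⟨n, h1, h2, h3, hn⟩ := ((hL _ hz _ hε2).and <| (hL _ hx _ hε2).and <|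
    (hL _ hy _ hε2).and (eventually_ge_atTop 1)).exists
  have hn0 : (0 : ℝ) < n := by exact_mod_cast hn
  have hm : ∀ x : H, AEMeasurable (fun ω => ENNReal.ofReal (Real.exp ⟪x, S n ω⟫)) P := fun x =>
    (ENNReal.measurable_ofReal.comp (Real.measurable_exp.comp (hS n x))).aemeasurable
  have key := ENNReal.lintegral_mul_norm_pow_le (hm x) (hm y) hp hq hpq
  have hpt : ∀ ω, ENNReal.ofReal (Real.exp ⟪x, S n ω⟫) ^ p *
      ENNReal.ofReal (Real.exp ⟪y, S n ω⟫) ^ q =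
        ENNReal.ofReal (Real.exp ⟪p • x + q • y, S n ω⟫) := by
    intro ω
    rw [ENNReal.ofReal_rpow_of_pos (Real.exp_pos _), ENNReal.ofReal_rpow_of_pos (Real.exp_pos _),
      ← ENNReal.ofReal_mul (by positivity), ← Real.exp_mul, ← Real.exp_mul, ← Real.exp_add,
      inner_add_left, real_inner_smul_left, real_inner_smul_left]
    congr 2; ring
  simp_rw [hpt] at key
  have h4 := h1.1.trans (key.trans (mul_le_mul' (ENNReal.rpow_le_rpow h2.2 hp)
    (ENNReal.rpow_le_rpow h3.2 hq)))
  rw [ENNReal.ofReal_rpow_of_pos (Real.exp_pos _), ENNReal.ofReal_rpow_of_pos (Real.exp_pos _),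
    ← ENNReal.ofReal_mul (by positivity), ← Real.exp_mul, ← Real.exp_mul, ← Real.exp_add,
    ENNReal.ofReal_le_ofReal_iff (Real.exp_pos _).le, Real.exp_le_exp] at h4
  have h5 : (n : ℝ) * (L (p • x + q • y) - ε / 2) ≤ n * (p * L x + q * L y + ε / 2) := by
    refine h4.trans_eq ?_
    linear_combination (n : ℝ) * (ε / 2) * hpq
  have h6 := le_of_mul_le_mul_left h5 hn0
  simp only [smul_eq_mul]
  linarith

/-- A convex function lies above its tangent at a point of differentiability. -/
lemma ConvexOn.add_inner_le_of_hasGradientAt {H : Type*} [NormedAddCommGroup H]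
    [InnerProductSpace ℝ H] [CompleteSpace H] {D : Set H} {f : H → ℝ} (hf : ConvexOn ℝ D f)
    {x g : H} (hx : x ∈ D) (hg : HasGradientAt f g x) {y : H} (hy : y ∈ D) :
    f x + ⟪y - x, g⟫ ≤ f y := by
  have h1 := (hg.hasFDerivAt.hasLineDerivAt (y - x)).tendsto_slope_zero_right
  rw [InnerProductSpace.toDual_apply_apply, real_inner_comm] at h1
  have h2 : ∀ᶠ t : ℝ in 𝓝[>] 0, t⁻¹ • (f (x + t • (y - x)) - f x) ≤ f y - f x := by
    filter_upwards [Ioo_mem_nhdsGT (zero_lt_one' ℝ)] with t ht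
    have h3 := hf.2 hx hy (sub_nonneg.2 ht.2.le) ht.1.le (by ring)
    rw [show (1 - t) • x + t • y = x + t • (y - x) by module] at h3
    rw [smul_eq_mul, inv_mul_le_iff₀ ht.1]
    simp only [smul_eq_mul] at h3
    linarith
  have := le_of_tendsto h1 h2
  linarith

/-- Near a point `x` of differentiability with gradient `g`, the growth of `f` along short rays is
controlled by `g` up to an arbitrarily small error. -/
lemma HasGradientAt.exists_forall_lt_add_mul_inner {H : Type*} [NormedAddCommGroup H]
    [InnerProductSpace ℝ H] [CompleteSpace H] {D : Set H} (hD : IsOpen D) {f : H → ℝ} {x g : H}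
    (hx : x ∈ D) (hg : HasGradientAt f g x) {η κ : ℝ} (hη : 0 < η) (hκ : ⟪x, g⟫ + η - f x < κ) :
    ∃ t > 0, ∃ s > 0, ∀ y ∈ Metric.ball x s, y ∈ D ∧ (1 + t) • y ∈ D ∧
      f ((1 + t) • y) < f y + t * (⟪y, g⟫ + η) ∧ ⟪y, g⟫ + η - f y < κ := by
  have hc : 0 < η / (2 * (‖x‖ + 3)) := by positivity
  have hcont : ContinuousAt (fun y => ⟪y, g⟫ + η - f y) x :=
    ((by fun_prop : ContinuousAt (fun y => ⟪y, g⟫ + η) x)).sub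
      hg.hasFDerivAt.continuousAt
  obtain ⟨ρ, hρ0, hρ⟩ := Metric.eventually_nhds_iff_ball.1
    ((hD.eventually_mem hx).and (((hasGradientAt_iff_isLittleO.1 hg).bound hc).and
      (hcont.eventually_lt_const hκ)))
  set t := min 1 (ρ / (2 * (‖x‖ + 2))) with ht
  have ht0 : 0 < t := by positivity
  have ht1 : t ≤ 1 := min_le_left _ _
  have htρ : t * (‖x‖ + 2) < ρ := by
    have h1 : t ≤ ρ / (2 * (‖x‖ + 2)) := min_le_right _ _
    rw [le_div_iff₀ (by positivity)] at h1
    linarith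
  refine ⟨t, ht0, t, ht0, fun y hy => ?_⟩
  rw [mem_ball_iff_norm] at hy
  have hyn : ‖y‖ ≤ ‖x‖ + 1 := by
    have := norm_le_norm_add_norm_sub' y x
    linarith
  have hdist : ‖(1 + t) • y - x‖ ≤ t * (‖x‖ + 2) := by
    have h1 : (1 + t) • y - x = (y - x) + t • y := by module
    rw [h1]
    refine (norm_add_le _ _).trans ?_
    rw [norm_smul, Real.norm_of_nonneg ht0.le]
    have := mul_le_mul_of_nonneg_left hyn ht0.le
    linarith
  have htx : t ≤ t * (‖x‖ + 2) := le_mul_of_one_le_right ht0.le (by linarith [norm_nonneg x])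
  obtain ⟨hyD, hyo, hyκ⟩ := hρ y (mem_ball_iff_norm.2 (by linarith))
  obtain ⟨hzD, hzo, -⟩ := hρ ((1 + t) • y) (mem_ball_iff_norm.2 (by linarith))
  refine ⟨hyD, hzD, ?_, hyκ⟩
  set c := η / (2 * (‖x‖ + 3)) with hcdef
  have hyo' := hyo.trans (mul_le_mul_of_nonneg_left hy.le hc.le)
  have hzo' := hzo.trans (mul_le_mul_of_nonneg_left hdist hc.le)
  have h1 := (abs_le.1 hyo').1
  have h2 := (abs_le.1 hzo').2
  have h3 : inner ℝ g ((1 + t) • y - x) = inner ℝ g (y - x) + t * ⟪y, g⟫ := by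
    rw [show (1 + t) • y - x = (y - x) + t • y by module, inner_add_right, real_inner_smul_right,
      real_inner_comm g y]
  rw [h3] at h2
  have h4 : c * t + c * (t * (‖x‖ + 2)) = t * η / 2 := by
    rw [hcdef]; field_simp; ring
  have h5 : 0 < t * η := by positivity
  linarith

/-- **Theorem 5(1).**
Under (A1'), (A2), (A3), if `λ₀ ∈ D`, `Λ` is differentiable at `λ₀` with `x₀ = ∇Λ(λ₀)`,
and `liminf (log k(n))/n > Λ*(x₀)`, then there is `r > 0` with `B(λ₀,r) ⊆ D` such that
almost surely `Λₙ^ω` converges uniformly to `Λ` on `B(λ₀,r)`. -/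
theorem theorem5_part1
    {Ω : Type*} [MeasurableSpace Ω] (P : Measure Ω) [IsProbabilityMeasure P]
    {E : Type*} [MeasurableSpace E] (d : ℕ)
    -- the stationary process
    (Xseq : Ω → ℕ → E) (hXmeas : Measurable Xseq)
    (hstat : Measure.map (fun ω => fun i => Xseq ω (i + 1)) P = Measure.map Xseq P)
    -- the ℝ^d-valued functionals SₙΦ
    (SΦ : ℕ → (ℕ → E) → EuclideanSpace ℝ (Fin d)) (hSΦmeas : ∀ n, Measurable (SΦ n))
    -- the logarithmic moment generating functions Λₙ
    (Lmgf : ℕ → EuclideanSpace ℝ (Fin d) → EReal)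
    (hLmgf : ∀ n lam, Lmgf n lam = ((n : ℝ)⁻¹ : EReal) *
      ENNReal.log (∫⁻ ω, ENNReal.ofReal (Real.exp ⟪lam, SΦ n (Xseq ω)⟫) ∂P))
    -- (A1'): Λₙ → Λ, finite on a convex open set D
    (D : Set (EuclideanSpace ℝ (Fin d))) (hDopen : IsOpen D) (hDconv : Convex ℝ D)
    (Λ : EuclideanSpace ℝ (Fin d) → ℝ)
    (hΛ : ∀ lam ∈ D, Tendsto (fun n => Lmgf n lam) atTop (nhds ((Λ lam : ℝ) : EReal)))
    -- the Fenchel-Legendre transform of Λ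
    (Λstar : EuclideanSpace ℝ (Fin d) → ℝ)
    (hΛstar : ∀ x, Λstar x = ⨆ lam : D, (⟪(lam : EuclideanSpace ℝ (Fin d)), x⟫ - Λ lam))
    -- (A2): mixing
    (alphaX : ℕ → ℝ) (halpha0 : alphaX 0 = 1 / 2)
    (halpha : ∀ m, 1 ≤ m → alphaX m = ⨆ i : ℕ, sSup {r : ℝ | ∃ A B : Set Ω,
      MeasurableSet[⨆ kk ∈ Set.Iic i,
        MeasurableSpace.comap (fun ω => Xseq ω kk) inferInstance] A ∧
      MeasurableSet[⨆ jj ∈ Set.Ici (i + m),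
        MeasurableSpace.comap (fun ω => Xseq ω jj) inferInstance] B ∧
      r = |(P A).toReal * (P B).toReal - (P (A ∩ B)).toReal|})
    (αinv : ℝ → ℝ≥0∞)
    (hαinv : ∀ u, αinv u = sInf ((fun m : ℕ => (m : ℝ≥0∞)) '' {m | alphaX m ≤ u}))
    (hA2 : ∀ h : ℝ, 0 < h → ∫⁻ u in Set.Ioc (0 : ℝ) 1, (αinv u) ^ h ∂volume < ⊤)
    -- (A3): approximation by functions of 2n coordinates
    (SΦapp : ℕ → (ℕ → E) → EuclideanSpace ℝ (Fin d))
    (happdep : ∀ n (z z' : ℕ → E), (∀ i < 2 * n, z i = z' i) → SΦapp n z = SΦapp n z')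
    (δ : ℕ → ℝ) (hδ0 : Tendsto δ atTop (nhds 0))
    (hδ : ∀ n z, ‖SΦ n z - SΦapp n z‖ ≤ (n : ℝ) * δ n)
    -- the sequence k(n)
    (k : ℕ → ℕ) (hkpos : ∀ n, 0 < k n)
    -- the empirical logarithmic moment generating functions Λₙ^ω
    (Λemp : ℕ → Ω → EuclideanSpace ℝ (Fin d) → ℝ)
    (hΛemp : ∀ n ω lam, Λemp n ω lam = (n : ℝ)⁻¹ *
      Real.log ((k n : ℝ)⁻¹ * ∑ j ∈ Finset.Icc 1 (k n),
        Real.exp ⟪lam, SΦ n (fun i => Xseq ω (i + (j - 1) * n))⟫))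
    -- λ₀ ∈ D at which Λ is differentiable, with gradient x₀
    (lam₀ : EuclideanSpace ℝ (Fin d)) (hlam₀ : lam₀ ∈ D)
    (x₀ : EuclideanSpace ℝ (Fin d)) (hx₀ : HasGradientAt Λ x₀ lam₀)
    (hliminf : (Λstar x₀ : EReal) <
      Filter.atTop.liminf (fun n => ((Real.log (k n) / n : ℝ) : EReal))) :
    ∃ r > (0 : ℝ), Metric.closedBall lam₀ r ⊆ D ∧
      ∀ᵐ ω ∂P, TendstoUniformlyOn (fun n lam => Λemp n ω lam) Λ atTop
        (Metric.closedBall lam₀ r) := by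
  obtain ⟨ω₀⟩ : Nonempty Ω := nonempty_of_isProbabilityMeasure P
  set e : E := Xseq ω₀ 0
  have hVmeas : ∀ (n : ℕ) (x : EuclideanSpace ℝ (Fin d)), Measurable fun z => ⟪x, SΦ n z⟫ :=
    fun n x => (continuous_const.inner continuous_id).measurable.comp (hSΦmeas n)
  have hmgf : ∀ x ∈ D, ∀ ε > 0, ∀ᶠ n : ℕ in atTop, ENNReal.ofReal (Real.exp (n * (Λ x - ε))) ≤
        ∫⁻ ω, ENNReal.ofReal (Real.exp ⟪x, SΦ n (Xseq ω)⟫) ∂P ∧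
      ∫⁻ ω, ENNReal.ofReal (Real.exp ⟪x, SΦ n (Xseq ω)⟫) ∂P ≤
        ENNReal.ofReal (Real.exp (n * (Λ x + ε))) := by
    intro x hx ε hε
    have h := hΛ x hx
    simp only [hLmgf] at h
    exact eventually_exp_le_and_le_exp_of_tendsto_log h hε
  have hconv : ConvexOn ℝ D Λ := convexOn_of_laplace_exp_bounds hDconv
    (S := fun n ω => SΦ n (Xseq ω)) (fun n x => (hVmeas n x).comp hXmeas) hmgf
  obtain ⟨κ, hκ1, hκ2⟩ := EReal.lt_iff_exists_real_btwn.1 hliminf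
  have hkκ : ∀ᶠ n : ℕ in atTop, Real.exp (n * κ) ≤ k n := by
    filter_upwards [eventually_lt_of_lt_liminf hκ2, eventually_ge_atTop 1] with n hn hn1
    have hn0 : (0 : ℝ) < n := by exact_mod_cast hn1
    rw [EReal.coe_lt_coe_iff, lt_div_iff₀ hn0] at hn
    exact (Real.le_log_iff_exp_le (by exact_mod_cast hkpos n)).1 (by linarith)
  have hc0 : ⟪lam₀, x₀⟫ - Λ lam₀ < κ := by
    refine lt_of_le_of_lt ?_ (EReal.coe_lt_coe_iff.1 hκ1)
    rw [hΛstar]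
    refine le_ciSup (f := fun lam : D => ⟪(lam : EuclideanSpace ℝ (Fin d)), x₀⟫ - Λ lam)
      ⟨⟪lam₀, x₀⟫ - Λ lam₀, ?_⟩ ⟨lam₀, hlam₀⟩
    rintro _ ⟨lam, rfl⟩
    have := hconv.add_inner_le_of_hasGradientAt hlam₀ hx₀ lam.2
    rw [inner_sub_left] at this
    simp only
    linarith
  obtain ⟨t, ht0, s, hs0, hs⟩ := hx₀.exists_forall_lt_add_mul_inner hDopen hlam₀
    (η := (κ - (⟪lam₀, x₀⟫ - Λ lam₀)) / 2) (κ := κ) (by linarith) (by linarith)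
  have hballD : Metric.ball lam₀ s ⊆ D := fun y hy => (hs y hy).1
  obtain ⟨Q, hQc, hQs, r, hr0, hrs, hQ⟩ := exists_countable_tendstoUniformlyOn_of_convexOn lam₀ hs0
  refine ⟨r, hr0, (Metric.closedBall_subset_ball hrs).trans hballD, ?_⟩
  have halpha' : ∀ m, 1 ≤ m → alphaX m = ⨆ i, sSup (mixingDefects P Xseq i m) := halpha
  have hmix : ∀ h : ℝ, 0 < h → ∃ C : ℝ, 0 ≤ C ∧
      ∀ m : ℕ, 1 ≤ m → (⨆ i, sSup (mixingDefects P Xseq i m)) * (m : ℝ) ^ h ≤ C := by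
    intro h hh
    obtain ⟨C, hC0, hC⟩ := exists_forall_mul_rpow_le_of_lintegral_rpow_lt_top (a := alphaX)
      (fun m => by
        rcases Nat.eq_zero_or_pos m with rfl | hm
        · rw [halpha0]; norm_num
        · rw [halpha' m hm]; exact iSup_sSup_mixingDefects_le_one m)
      halpha0.ge
      (fun m n hm hmn => by
        rw [halpha' m hm, halpha' n (hm.trans hmn)]; exact iSup_sSup_mixingDefects_anti hmn)
      hαinv hh (hA2 h hh)
    exact ⟨C, hC0, fun m hm => halpha' m hm ▸ hC m hm⟩
  have happ : ∀ x : EuclideanSpace ℝ (Fin d), ∀ ε > 0, ∀ᶠ n : ℕ in atTop, ∀ z,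
      |⟪x, SΦ n z⟫ - ⟪x, SΦ n (truncSeq e (2 * n) z)⟫| ≤ n * ε := by
    intro x ε hε
    have hlim : Tendsto (fun n => ‖x‖ * (2 * δ n)) atTop (𝓝 0) := by
      simpa using (hδ0.const_mul 2).const_mul ‖x‖
    filter_upwards [hlim.eventually_le_const hε] with n hn z
    have h1 := hδ n z
    have h2 := hδ n (truncSeq e (2 * n) z)
    rw [← happdep n z (truncSeq e (2 * n) z) fun i hi => by simp [truncSeq, hi]] at h2
    have h3 : ‖SΦ n z - SΦ n (truncSeq e (2 * n) z)‖ ≤ n * (2 * δ n) := by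
      have := norm_sub_le_norm_sub_add_norm_sub (SΦ n z) (SΦapp n z) (SΦ n (truncSeq e (2 * n) z))
      rw [norm_sub_rev (SΦapp n z)] at this
      linarith
    rw [← inner_sub_right]
    calc |⟪x, SΦ n z - SΦ n (truncSeq e (2 * n) z)⟫|
        ≤ ‖x‖ * ‖SΦ n z - SΦ n (truncSeq e (2 * n) z)‖ := abs_real_inner_le_norm _ _
      _ ≤ ‖x‖ * (n * (2 * δ n)) := by gcongr
      _ = n * (‖x‖ * (2 * δ n)) := by ring
      _ ≤ n * ε := by gcongr
  have hsum : ∀ n ω x, Λemp n ω x = (n : ℝ)⁻¹ * Real.log ((k n : ℝ)⁻¹ *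
      ∑ j ∈ Finset.range (k n), Real.exp ⟪x, SΦ n (fun i => Xseq ω (i + j * n))⟫) := by
    intro n ω x
    rw [hΛemp]
    congr 3
    refine Finset.sum_nbij' (fun j => j - 1) (fun j => j + 1) ?_ ?_ ?_ ?_ fun _ _ => rfl
    all_goals intro j hj; simp only [Finset.mem_Icc, Finset.mem_range] at *; omega
  have hpt : ∀ x ∈ Metric.ball lam₀ s, ∀ᵐ ω ∂P, Tendsto (fun n => Λemp n ω x) atTop (𝓝 (Λ x)) := by
    intro x hx
    obtain ⟨hxD, hxD', hxt, hxκ⟩ := hs x hx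
    have hup : ∀ m : ℕ, ∀ᵐ ω ∂P, ∀ᶠ n : ℕ in atTop, _ := fun m =>
      ae_eventually_average_exp_le hXmeas hstat (V := fun n z => ⟪x, SΦ n z⟫)
        (fun n => hVmeas n x) hkpos (fun ε hε => (hmgf x hxD ε hε).mono fun n hn => hn.2)
        (Nat.one_div_pos_of_nat (n := m))
    have hlow : ∀ m : ℕ, ∀ᵐ ω ∂P, ∀ᶠ n : ℕ in atTop, _ := fun m =>
      ae_eventually_exp_le_average hXmeas hstat hmix (V := fun n z => ⟪x, SΦ n z⟫)
        (fun n => hVmeas n x) e (happ x) hkpos ht0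
        (fun ε hε => (hmgf x hxD ε hε).mono fun n hn => hn.1)
        (fun ε hε => (hmgf _ hxD' ε hε).mono fun n hn => by
          simpa only [real_inner_smul_left] using hn.2)
        hxt hxκ hkκ (Nat.one_div_pos_of_nat (n := m))
    filter_upwards [ae_all_iff.2 hup, ae_all_iff.2 hlow] with ω h1 h2
    simp only [hsum]
    exact tendsto_inv_mul_log_of_exp_le_of_le_exp fun m => (h2 m).and (h1 m)
  filter_upwards [(ae_ball_iff hQc).2 fun q hq => hpt q (hQs hq)] with ω hω
  refine hQ _ _ (fun n => ?_) (hconv.subset hballD (convex_ball _ _)) hω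
  have h1 := convexOn_log_mul_sum_exp_inner (Finset.range (k n))
    (Finset.nonempty_range_iff.2 (hkpos n).ne') (fun j => SΦ n (fun i => Xseq ω (i + j * n)))
    (c := (k n : ℝ)⁻¹) (inv_pos.2 (by exact_mod_cast hkpos n))
  have h2 := (h1.subset (subset_univ _) (convex_ball lam₀ s)).smul
    (inv_nonneg.2 (Nat.cast_nonneg (α := ℝ) n))
  simpa only [smul_eq_mul, hsum] using h2
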